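/- Let N ≥ 2, p ∈ (1,∞) and 0 < R₀ < R < R₁. Then there exist nonempty disjoint open sets Ω₁, Ω₂ ⊆ B_{R₁}(0) \ closure(B_{R₀}(0)) such that λ₁(p, Ω₁) < λ₁(p, B_R(0) \ closure(B_{R₀}(0))) and λ₁(p, Ω₂) < λ₁(p, B_{R₁}(0) \ closure(B_R(0))). -/

import Mathlib

open MeasureTheory Metric Set Filter
open scoped RealInnerProductSpace ENNReal Topology

/-- The first Dirichlet eigenvalue of the p-Laplacian on `Ω`, defined variationally as the
infimum of Rayleigh quotients of smooth, not identically zero functions with compact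
support contained in `Ω`. -/
noncomputable def lam1 {N : ℕ} (p : ℝ) (Ω : Set (EuclideanSpace ℝ (Fin N))) : ℝ :=
  sInf { r : ℝ | ∃ u : EuclideanSpace ℝ (Fin N) → ℝ,
    ContDiff ℝ (⊤ : ℕ∞) u ∧ u ≠ 0 ∧ HasCompactSupport u ∧ tsupport u ⊆ Ω ∧
    r = (∫ x in Ω, ‖gradient u x‖ ^ p) / (∫ x in Ω, |u x| ^ p) }

/-- The first standard basis vector `e₁` of `ℝ^N`. -/
noncomputable def e1 (N : ℕ) : EuclideanSpace ℝ (Fin N) :=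
  (WithLp.equiv 2 (Fin N → ℝ)).symm (fun i => if (i : ℕ) = 0 then 1 else 0)

/-- The eccentric annulus `Ω_s = B_{R₁}(0) \ closure (B_{R₀}(s e₁))`. -/
noncomputable def Om (N : ℕ) (R₀ R₁ s : ℝ) : Set (EuclideanSpace ℝ (Fin N)) :=
  ball 0 R₁ \ closure (ball (s • e1 N) R₀)

/-- `u` is a first eigenfunction of the p-Laplacian on `Ω` with eigenvalue `lam`:
C¹ on an open set containing the closure of `Ω`, positive in `Ω`, zero on `∂Ω`, and a weak
solution of `−Δ_p u = lam · u^{p−1}`. -/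
def IsFirstEigenfunction {N : ℕ} (p : ℝ) (Ω : Set (EuclideanSpace ℝ (Fin N)))
    (lam : ℝ) (u : EuclideanSpace ℝ (Fin N) → ℝ) : Prop :=
  (∃ V : Set (EuclideanSpace ℝ (Fin N)), IsOpen V ∧ closure Ω ⊆ V ∧ ContDiffOn ℝ 1 u V) ∧
  (∀ x ∈ Ω, 0 < u x) ∧
  (∀ x ∈ frontier Ω, u x = 0) ∧
  (∀ φ : EuclideanSpace ℝ (Fin N) → ℝ, ContDiff ℝ (⊤ : ℕ∞) φ → HasCompactSupport φ →
    tsupport φ ⊆ Ω →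
    ∫ x in Ω, ‖gradient u x‖ ^ (p - 2) * ⟪gradient u x, gradient φ x⟫ =
      lam * ∫ x in Ω, (u x) ^ (p - 1) * φ x)


section helpers

variable {N : ℕ}


lemma norm_gradient_eq (u : EuclideanSpace ℝ (Fin N) → ℝ) (x : EuclideanSpace ℝ (Fin N)) :
    ‖gradient u x‖ = ‖fderiv ℝ u x‖ := by
  unfold gradient
  simp

lemma setInt_mass {p : ℝ} (hp : 1 < p) {Ω : Set (EuclideanSpace ℝ (Fin N))}
    {u : EuclideanSpace ℝ (Fin N) → ℝ} (hu : tsupport u ⊆ Ω) :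
    ∫ x in Ω, |u x| ^ p = ∫ x, |u x| ^ p := by
  apply setIntegral_eq_integral_of_forall_compl_eq_zero
  intro x hx
  have : u x = 0 := image_eq_zero_of_notMem_tsupport (fun h => hx (hu h))
  rw [this, abs_zero, Real.zero_rpow (by linarith)]

lemma setInt_energy {p : ℝ} (hp : 1 < p) {Ω : Set (EuclideanSpace ℝ (Fin N))}
    {u : EuclideanSpace ℝ (Fin N) → ℝ} (hu : tsupport u ⊆ Ω) :
    ∫ x in Ω, ‖gradient u x‖ ^ p = ∫ x, ‖fderiv ℝ u x‖ ^ p := by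
  simp_rw [norm_gradient_eq]
  apply setIntegral_eq_integral_of_forall_compl_eq_zero
  intro x hx
  have h : x ∉ tsupport (fderiv ℝ u) := fun h => hx (hu (tsupport_fderiv_subset ℝ h))
  rw [image_eq_zero_of_notMem_tsupport h, norm_zero, Real.zero_rpow (by linarith)]

lemma lam1_bdd (p : ℝ) (Ω : Set (EuclideanSpace ℝ (Fin N))) :
    BddBelow { r : ℝ | ∃ u : EuclideanSpace ℝ (Fin N) → ℝ,
    ContDiff ℝ (⊤ : ℕ∞) u ∧ u ≠ 0 ∧ HasCompactSupport u ∧ tsupport u ⊆ Ω ∧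
    r = (∫ x in Ω, ‖gradient u x‖ ^ p) / (∫ x in Ω, |u x| ^ p) } := by
  refine ⟨0, ?_⟩
  rintro r ⟨u, -, -, -, -, rfl⟩
  apply div_nonneg <;> exact integral_nonneg (fun x => by positivity)

lemma lam1_mul_le_smooth {p : ℝ} (hp : 1 < p) {Ω : Set (EuclideanSpace ℝ (Fin N))}
    {u : EuclideanSpace ℝ (Fin N) → ℝ} (hu : ContDiff ℝ (⊤ : ℕ∞) u)
    (hc : HasCompactSupport u) (hs : tsupport u ⊆ Ω) :
    lam1 p Ω * ∫ x, |u x| ^ p ≤ ∫ x, ‖fderiv ℝ u x‖ ^ p := by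
  have hE : 0 ≤ ∫ x, ‖fderiv ℝ u x‖ ^ p := integral_nonneg (fun x => by positivity)
  have hm : 0 ≤ ∫ x, |u x| ^ p := integral_nonneg (fun x => by positivity)
  rcases hm.eq_or_lt with h0 | hpos
  · rw [← h0, mul_zero]; exact hE
  · have hne : u ≠ 0 := by
      rintro rfl
      simp [Real.zero_rpow (show p ≠ 0 by linarith)] at hpos
    have : lam1 p Ω ≤ (∫ x, ‖fderiv ℝ u x‖ ^ p) / (∫ x, |u x| ^ p) := by
      apply csInf_le (lam1_bdd p Ω)
      exact ⟨u, hu, hne, hc, hs, by rw [setInt_mass hp hs, setInt_energy hp hs]⟩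
    rwa [le_div_iff₀ hpos] at this

lemma lam1_lt_exists {p : ℝ} (hp : 1 < p) {Ω : Set (EuclideanSpace ℝ (Fin N))}
    (hΩ : IsOpen Ω) (hne : Ω.Nonempty) {l : ℝ} (hl : lam1 p Ω < l) :
    ∃ u : EuclideanSpace ℝ (Fin N) → ℝ, ContDiff ℝ (⊤ : ℕ∞) u ∧ HasCompactSupport u ∧
      tsupport u ⊆ Ω ∧ ∫ x, ‖fderiv ℝ u x‖ ^ p < l * ∫ x, |u x| ^ p := by
  obtain ⟨x0, hx0⟩ := hne
  obtain ⟨r, ⟨u, hu, hu0, hc, hs, rfl⟩, hr⟩ := exists_lt_of_csInf_lt (by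
    obtain ⟨f, hf, hfc, hfs, -, hf1⟩ := exists_contDiff_tsupport_subset (n := ⊤) (hΩ.mem_nhds hx0)
    refine ⟨_, f, hfs, ?_, hfc, hf, rfl⟩
    rintro rfl
    simp at hf1) hl
  refine ⟨u, hu, hc, hs, ?_⟩
  rw [setInt_mass hp hs, setInt_energy hp hs] at hr
  rwa [div_lt_iff₀] at hr
  apply Continuous.integral_pos_of_hasCompactSupport_nonneg_nonzero (x := (Function.ne_iff.1 hu0).choose)
  · exact (hu.continuous.abs).rpow_const (fun x => Or.inr (by linarith))
  · apply hc.mono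
    intro x hx hx'
    apply hx
    simp [hx', Real.zero_rpow (show p ≠ 0 by linarith)]
  · intro x; positivity
  · have := (Function.ne_iff.1 hu0).choose_spec
    exact (Real.rpow_pos_of_pos (abs_pos.2 this) _).ne'

lemma tangent_le {p : ℝ} (hp : 1 < p) {a A : ℝ} (ha : 0 ≤ a) (hA : 0 ≤ A) :
    A ^ p + p * A ^ (p - 1) * (a - A) ≤ a ^ p := by
  rcases hA.eq_or_lt with rfl | hA
  · rw [Real.zero_rpow (by linarith), Real.zero_rpow (by linarith)]
    simpa using by positivity
  · have h := one_add_mul_self_le_rpow_one_add (s := a / A - 1) (by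
      have : 0 ≤ a / A := by positivity
      linarith) hp.le
    have e : 1 + (a / A - 1) = a / A := by ring
    rw [e, Real.div_rpow ha hA.le, le_div_iff₀ (by positivity)] at h
    have e2 : A ^ p = A ^ (p - 1) * A := by
      rw [← Real.rpow_add_one hA.ne', sub_add_cancel]
    calc _ = (1 + p * (a / A - 1)) * A ^ p := by
            rw [e2]; field_simp
      _ ≤ _ := h

end helpers

section mollify

variable {N : ℕ}

open scoped Convolution

/-- Jensen-type bound for the gradient of a mollified Lipschitz function. -/
lemma mollify_grad {p : ℝ} (hp : 1 < p) {g : EuclideanSpace ℝ (Fin N) → ℝ} {K : NNReal}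
    (hg : LipschitzWith K g) (φ : ContDiffBump (0 : EuclideanSpace ℝ (Fin N)))
    (x : EuclideanSpace ℝ (Fin N)) :
    ‖fderiv ℝ (φ.normed volume ⋆[ContinuousLinearMap.lsmul ℝ ℝ, volume] g) x‖ ^ p ≤
      (φ.normed volume ⋆[ContinuousLinearMap.lsmul ℝ ℝ, volume]
        (fun y => ‖fderiv ℝ g y‖ ^ p)) x := by
  set ψ := φ.normed volume with hψ
  have hψi : Integrable ψ := φ.integrable_normed
  have hψ0 : ∀ y, 0 ≤ ψ y := fun y => φ.nonneg_normed y
  have hψc : Continuous ψ := φ.continuous_normed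
  have hK : ∀ y, ‖fderiv ℝ g y‖ ≤ K := fun y => norm_fderiv_le_of_lipschitz ℝ hg
  have hmeas : Measurable (fun y => fderiv ℝ g y) := measurable_fderiv ℝ g
  have hdm : Measurable (fun y => fderiv ℝ g (x - y)) :=
    hmeas.comp (measurable_const.sub measurable_id)
  have key := hasFDerivAt_integral_of_dominated_loc_of_lip (𝕜 := ℝ) (μ := volume)
    (F := fun (x' : EuclideanSpace ℝ (Fin N)) (y : EuclideanSpace ℝ (Fin N)) => ψ y * g (x' - y))
    (F' := fun y => ψ y • fderiv ℝ g (x - y)) (x₀ := x) (s := univ)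
    (bound := fun y => ψ y * K) univ_mem
    (Eventually.of_forall fun x' => by
      have : Continuous (fun y => ψ y * g (x' - y)) :=
        hψc.mul (hg.continuous.comp (continuous_const.sub continuous_id))
      exact this.aestronglyMeasurable)
    (by
      apply Continuous.integrable_of_hasCompactSupport
      · exact hψc.mul (hg.continuous.comp (continuous_const.sub continuous_id))
      · exact φ.hasCompactSupport_normed.mul_right)
    (by
      exact (hψc.measurable.smul hdm).aestronglyMeasurable)
    (Eventually.of_forall fun y => by
      rw [lipschitzOnWith_univ]
      apply LipschitzWith.of_dist_le_mul
      intro a b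
      have h := hg.dist_le_mul (a - y) (b - y)
      rw [dist_sub_right] at h
      rw [Real.dist_eq, ← mul_sub, abs_mul, ← Real.dist_eq, abs_of_nonneg (hψ0 y)]
      rw [Real.coe_nnabs, abs_of_nonneg (mul_nonneg (hψ0 y) K.coe_nonneg), mul_assoc]
      exact mul_le_mul_of_nonneg_left h (hψ0 y))
    (hψi.mul_const _)
    (by
      have h1 : ∀ᵐ y ∂(volume : Measure (EuclideanSpace ℝ (Fin N))),
          DifferentiableAt ℝ g (x - y) :=
        (quasiMeasurePreserving_sub_left volume x).ae hg.ae_differentiableAt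
      filter_upwards [h1] with y hy
      have h2 : HasFDerivAt (fun x' => g (x' - y)) (fderiv ℝ g (x - y)) x := by
        have := hy.hasFDerivAt.comp x ((hasFDerivAt_id x).sub_const y)
        rw [ContinuousLinearMap.comp_id] at this
        exact this
      exact h2.const_mul (ψ y))
  have e1 : (ψ ⋆[ContinuousLinearMap.lsmul ℝ ℝ, volume] g) =
      fun x' => ∫ y, ψ y * g (x' - y) := by
    ext x'; simp [convolution_def]
  rw [e1, key.2.fderiv]
  have hai : Integrable (fun y => ψ y * ‖fderiv ℝ g (x - y)‖) := by
    apply (hψi.mul_const (K : ℝ)).mono'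
    · exact (hψc.measurable.mul hdm.norm).aestronglyMeasurable
    · refine Eventually.of_forall fun y => ?_
      rw [Real.norm_eq_abs, abs_of_nonneg (mul_nonneg (hψ0 y) (norm_nonneg _))]
      exact mul_le_mul_of_nonneg_left (hK _) (hψ0 y)
  have hpi : Integrable (fun y => ψ y * ‖fderiv ℝ g (x - y)‖ ^ p) := by
    apply (hψi.mul_const ((K : ℝ) ^ p)).mono'
    · exact (hψc.measurable.mul (hdm.norm.pow_const p)).aestronglyMeasurable
    · refine Eventually.of_forall fun y => ?_
      rw [Real.norm_eq_abs, abs_of_nonneg (mul_nonneg (hψ0 y) (by positivity))]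
      exact mul_le_mul_of_nonneg_left
        (Real.rpow_le_rpow (norm_nonneg _) (hK _) (by linarith)) (hψ0 y)
  set A := ∫ y, ψ y * ‖fderiv ℝ g (x - y)‖ with hA
  have hA0 : 0 ≤ A := integral_nonneg fun y => mul_nonneg (hψ0 y) (norm_nonneg _)
  have hle : ‖∫ y, ψ y • fderiv ℝ g (x - y)‖ ≤ A := by
    refine (norm_integral_le_integral_norm _).trans (le_of_eq ?_)
    apply integral_congr_ae
    refine Eventually.of_forall fun y => ?_
    simp only [norm_smul, Real.norm_eq_abs, abs_of_nonneg (hψ0 y)]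
  refine (Real.rpow_le_rpow (norm_nonneg _) hle (by linarith)).trans ?_
  have hψ1 : ∫ y, ψ y = 1 := φ.integral_normed
  have hcv : (ψ ⋆[ContinuousLinearMap.lsmul ℝ ℝ, volume] (fun y => ‖fderiv ℝ g y‖ ^ p)) x
      = ∫ y, ψ y * ‖fderiv ℝ g (x - y)‖ ^ p := by
    simp [convolution_def]
  rw [hcv]
  calc A ^ p = ∫ y, (A ^ p - p * A ^ (p - 1) * A) * ψ y
        + (p * A ^ (p - 1)) * (ψ y * ‖fderiv ℝ g (x - y)‖) := by
        rw [integral_add (hψi.const_mul _) (hai.const_mul _), integral_const_mul,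
          integral_const_mul, hψ1, ← hA]
        ring
    _ ≤ _ := by
        apply integral_mono ((hψi.const_mul _).add (hai.const_mul _)) hpi
        intro y
        have := mul_le_mul_of_nonneg_left
          (tangent_le hp (norm_nonneg (fderiv ℝ g (x - y))) hA0) (hψ0 y)
        calc _ = ψ y * (A ^ p + p * A ^ (p - 1) * (‖fderiv ℝ g (x - y)‖ - A)) := by
              simp only [Pi.add_apply]; ring
          _ ≤ _ := this

lemma lam1_mul_le_lip {p : ℝ} (hp : 1 < p) {Ω : Set (EuclideanSpace ℝ (Fin N))}
    (hΩ : IsOpen Ω) {g : EuclideanSpace ℝ (Fin N) → ℝ} {K : NNReal}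
    (hg : LipschitzWith K g) (hc : HasCompactSupport g) (hs : tsupport g ⊆ Ω) :
    lam1 p Ω * ∫ x, |g x| ^ p ≤ ∫ x, ‖fderiv ℝ g x‖ ^ p := by
  obtain ⟨δ, hδ, hδΩ⟩ := hc.isCompact.exists_cthickening_subset_open hΩ hs
  set r : ℕ → ℝ := fun n => δ / (n + 1) with hr
  have hr0 : ∀ n, 0 < r n := fun n => by positivity
  have hrδ : ∀ n, r n ≤ δ := fun n => by
    apply div_le_self hδ.le
    have : (0 : ℝ) ≤ n := n.cast_nonneg
    linarith
  let φ : ℕ → ContDiffBump (0 : EuclideanSpace ℝ (Fin N)) := fun n =>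
    ⟨r n / 2, r n, by have := hr0 n; linarith, by have := hr0 n; linarith⟩
  have hφr : Tendsto (fun n => (φ n).rOut) atTop (𝓝 0) := by
    change Tendsto r atTop (𝓝 0)
    exact tendsto_const_div_atTop_nhds_zero_nat δ |>.comp (tendsto_add_atTop_nat 1) |>.congr
      (fun n => by simp [hr])
  set G : ℕ → EuclideanSpace ℝ (Fin N) → ℝ := fun n =>
    ((φ n).normed volume ⋆[ContinuousLinearMap.lsmul ℝ ℝ, volume] g) with hG
  have hpow : Measurable (fun y => ‖fderiv ℝ g y‖ ^ p) := (measurable_fderiv ℝ g).norm.pow_const p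
  have hIntA : Integrable (fun y => ‖fderiv ℝ g y‖ ^ p) := by
    have : Integrable ((tsupport g).indicator (fun _ => (K : ℝ) ^ p)) :=
      (integrable_indicator_iff (isClosed_tsupport g).measurableSet).2
        (integrableOn_const hc.isCompact.measure_lt_top.ne)
    apply this.mono' hpow.aestronglyMeasurable
    refine Eventually.of_forall fun y => ?_
    rw [Real.norm_eq_abs, abs_of_nonneg (by positivity)]
    by_cases hy : y ∈ tsupport g
    · rw [indicator_of_mem hy]
      exact Real.rpow_le_rpow (norm_nonneg _) (norm_fderiv_le_of_lipschitz ℝ hg) (by linarith)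
    · have h : y ∉ tsupport (fderiv ℝ g) := fun h => hy (tsupport_fderiv_subset ℝ h)
      rw [indicator_of_notMem hy, image_eq_zero_of_notMem_tsupport h, norm_zero,
        Real.zero_rpow (by linarith)]
  have hsupp : ∀ n, tsupport (G n) ⊆ cthickening δ (tsupport g) := by
    intro n
    apply closure_minimal _ isClosed_cthickening
    refine (support_convolution_subset _).trans ?_
    rintro _ ⟨a, ha, b, hb, rfl⟩
    rw [(φ n).support_normed_eq] at ha
    apply mem_cthickening_of_dist_le _ b _ _ (subset_tsupport g hb)
    rw [mem_ball_zero_iff] at ha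
    simp only [dist_eq_norm, add_sub_cancel_right]
    exact ha.le.trans (hrδ n)
  have hGc : ∀ n, HasCompactSupport (G n) := fun n =>
    (hc.isCompact.cthickening).of_isClosed_subset (isClosed_tsupport _) (hsupp n)
  have hGs : ∀ n, ContDiff ℝ (⊤ : ℕ∞) (G n) := fun n =>
    (φ n).hasCompactSupport_normed.contDiff_convolution_left _ (φ n).contDiff_normed
      hg.continuous.locallyIntegrable
  have hEn : ∀ n, lam1 p Ω * ∫ x, |G n x| ^ p ≤ ∫ x, ‖fderiv ℝ g x‖ ^ p := by
    intro n
    refine (lam1_mul_le_smooth hp (hGs n) (hGc n) ((hsupp n).trans hδΩ)).trans ?_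
    have hci : Integrable ((φ n).normed volume ⋆[ContinuousLinearMap.lsmul ℝ ℝ, volume]
        (fun y => ‖fderiv ℝ g y‖ ^ p)) := (φ n).integrable_normed.integrable_convolution _ hIntA
    calc ∫ x, ‖fderiv ℝ (G n) x‖ ^ p ≤
        ∫ x, ((φ n).normed volume ⋆[ContinuousLinearMap.lsmul ℝ ℝ, volume]
          (fun y => ‖fderiv ℝ g y‖ ^ p)) x :=
          integral_mono_of_nonneg (Eventually.of_forall fun x => by
            simp only [Pi.zero_apply]; positivity) hci
            (Eventually.of_forall fun x => mollify_grad hp hg (φ n) x)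
      _ = _ := by
          rw [integral_convolution _ (φ n).integrable_normed hIntA, (φ n).integral_normed]
          simp
  obtain ⟨B, hB⟩ := hg.continuous.bounded_above_of_compact_support hc
  have hGB : ∀ n x, |G n x| ≤ B + B + B := by
    intro n x
    have hB0 : 0 ≤ B := (norm_nonneg _).trans (hB x)
    have h := (φ n).dist_normed_convolution_le (μ := volume) (x₀ := x) (ε := B + B)
      hg.continuous.aestronglyMeasurable (fun y _ => by
        rw [dist_eq_norm]; exact (norm_sub_le _ _).trans (add_le_add (hB _) (hB _)))
    rw [Real.dist_eq] at h
    have h3 := hB x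
    rw [Real.norm_eq_abs] at h3
    have : |G n x| ≤ |G n x - g x| + |g x| := by
      have := abs_add_le (G n x - g x) (g x); simpa using this
    linarith
  have hlim : Tendsto (fun n => ∫ x, |G n x| ^ p) atTop (𝓝 (∫ x, |g x| ^ p)) := by
    apply tendsto_integral_of_dominated_convergence
      ((cthickening δ (tsupport g)).indicator (fun _ => (B + B + B) ^ p))
    · intro n
      exact ((hGs n).continuous.abs.rpow_const (fun x => Or.inr (by linarith))).aestronglyMeasurable
    · exact (integrable_indicator_iff isClosed_cthickening.measurableSet).2
        (integrableOn_const hc.isCompact.cthickening.measure_lt_top.ne)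
    · intro n
      refine Eventually.of_forall fun x => ?_
      rw [Real.norm_eq_abs, abs_of_nonneg (by positivity)]
      by_cases hx : x ∈ cthickening δ (tsupport g)
      · rw [indicator_of_mem hx]
        exact Real.rpow_le_rpow (abs_nonneg _) (hGB n x) (by linarith)
      · rw [indicator_of_notMem hx, image_eq_zero_of_notMem_tsupport (fun h => hx (hsupp n h)),
          abs_zero, Real.zero_rpow (by linarith)]
    · refine Eventually.of_forall fun x => ?_
      have := ContDiffBump.convolution_tendsto_right_of_continuous (μ := volume) hφr
        hg.continuous x
      exact this.abs.rpow_const (Or.inr (by linarith))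
  exact le_of_tendsto (hlim.const_mul _) (Eventually.of_forall hEn)

end mollify

section radial

variable {N : ℕ}

/-- A `C¹` radial profile on the annulus `a < r < b` with compact support. -/
structure Profile (a b : ℝ) (g : ℝ → ℝ) (a' b' : ℝ) : Prop where
  smooth : ContDiff ℝ 1 g
  ha : a < a'
  hab : a' ≤ b'
  hb : b' < b
  zero : ∀ r, -a < r → r ∉ Icc a' b' → g r = 0

lemma Profile.deriv_zero {a b a' b' : ℝ} {g : ℝ → ℝ} (h : Profile a b g a' b') (r : ℝ)
    (hr : -a < r) (hr' : r ∉ Icc a' b') : deriv g r = 0 := by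
  have : g =ᶠ[𝓝 r] fun _ => 0 := by
    filter_upwards [isOpen_Ioi.mem_nhds (show r ∈ Ioi (-a) from hr),
      isClosed_Icc.isOpen_compl.mem_nhds hr'] with s hs hs'
    exact h.zero s hs hs'
  rw [this.deriv_eq, deriv_const]

lemma hasCompactSupport_norm {b : ℝ} {f : ℝ → ℝ} (hf : ∀ r, b < r → f r = 0) :
    HasCompactSupport (fun x : EuclideanSpace ℝ (Fin N) => f ‖x‖) := by
  apply HasCompactSupport.intro (isCompact_closedBall 0 b)
  intro x hx
  apply hf
  simpa using hx

lemma integral_polar [Nontrivial (EuclideanSpace ℝ (Fin N))]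
    (h : EuclideanSpace ℝ (Fin N) → ℝ) :
    ∫ x, h x = ∫ z : (sphere (0 : EuclideanSpace ℝ (Fin N)) 1) × (Ioi (0 : ℝ)),
      h ((z.2 : ℝ) • (z.1 : EuclideanSpace ℝ (Fin N)))
      ∂((volume : Measure (EuclideanSpace ℝ (Fin N))).toSphere.prod (Measure.volumeIoiPow
        (Module.finrank ℝ (EuclideanSpace ℝ (Fin N)) - 1))) := by
  set μ := (volume : Measure (EuclideanSpace ℝ (Fin N)))
  calc
    ∫ x, h x = ∫ x : ({(0)}ᶜ : Set (EuclideanSpace ℝ (Fin N))), h x ∂(μ.comap (↑)) := by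
      rw [integral_subtype_comap (measurableSet_singleton _).compl h,
        restrict_compl_singleton]
    _ = _ := by
      rw [← μ.measurePreserving_homeomorphUnitSphereProd.integral_comp
        (Homeomorph.measurableEmbedding _)]
      apply integral_congr_ae
      refine Eventually.of_forall fun x => ?_
      have hx : ‖(x : EuclideanSpace ℝ (Fin N))‖ ≠ 0 := norm_ne_zero_iff.2 x.2
      simp [smul_smul, hx]

lemma integral_radial [Nontrivial (EuclideanSpace ℝ (Fin N))] (f : ℝ → ℝ) :
    ∫ x : EuclideanSpace ℝ (Fin N), f ‖x‖ =
      (volume : Measure (EuclideanSpace ℝ (Fin N))).toSphere.real univ *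
      ∫ r : Ioi (0 : ℝ), f r ∂(Measure.volumeIoiPow
        (Module.finrank ℝ (EuclideanSpace ℝ (Fin N)) - 1)) := by
  rw [integral_polar]
  have := integral_fun_snd (μ := (volume : Measure (EuclideanSpace ℝ (Fin N))).toSphere)
    (ν := Measure.volumeIoiPow (Module.finrank ℝ (EuclideanSpace ℝ (Fin N)) - 1))
    (fun r : Ioi (0 : ℝ) => f r)
  rw [← smul_eq_mul, ← this]
  apply integral_congr_ae
  refine Eventually.of_forall fun z => ?_
  have h1 : ‖(z.1 : EuclideanSpace ℝ (Fin N))‖ = 1 := by simp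
  have h2 : (0 : ℝ) < z.2 := z.2.2
  simp [norm_smul, abs_of_pos h2]

lemma exists_ray [Nontrivial (EuclideanSpace ℝ (Fin N))]
    {h : EuclideanSpace ℝ (Fin N) → ℝ} (hpos : 0 < ∫ x, h x) :
    ∃ ω : EuclideanSpace ℝ (Fin N), ‖ω‖ = 1 ∧
      0 < ∫ x : EuclideanSpace ℝ (Fin N), h (‖x‖ • ω) := by
  by_contra! hcon
  set S := (volume : Measure (EuclideanSpace ℝ (Fin N))).toSphere.real univ with hS
  set ν := Measure.volumeIoiPow (Module.finrank ℝ (EuclideanSpace ℝ (Fin N)) - 1)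
  set σ := (volume : Measure (EuclideanSpace ℝ (Fin N))).toSphere
  rw [integral_polar] at hpos
  by_cases hIntA : Integrable (fun z : (sphere (0 : EuclideanSpace ℝ (Fin N)) 1) × (Ioi (0 : ℝ)) =>
      h ((z.2 : ℝ) • (z.1 : EuclideanSpace ℝ (Fin N)))) (σ.prod ν)
  · rw [integral_prod _ hIntA] at hpos
    have hSpos : 0 < S := by
      have : 0 ≤ S := measureReal_nonneg
      refine this.lt_of_ne fun h0 => ?_
      have h1 : σ univ = 0 := by
        rcases (ENNReal.toReal_eq_zero_iff _).1 h0.symm with h | h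
        · exact h
        · exact absurd h (measure_ne_top _ _)
      have h2 : σ = 0 := Measure.measure_univ_eq_zero.1 h1
      rw [h2] at hpos
      simp at hpos
    refine absurd hpos (not_lt.2 (integral_nonpos fun ω => ?_))
    have h1 := hcon ω (by simp)
    rw [integral_radial (fun r => h (r • (ω : EuclideanSpace ℝ (Fin N))))] at h1
    exact nonpos_of_mul_nonpos_right h1 hSpos
  · rw [integral_undef hIntA] at hpos
    exact lt_irrefl _ hpos

lemma exists_profile [Nontrivial (EuclideanSpace ℝ (Fin N))] {p : ℝ} (hp : 1 < p) {a b : ℝ}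
    (ha : 0 < a) {l : ℝ} {u : EuclideanSpace ℝ (Fin N) → ℝ}
    (hu : ContDiff ℝ (⊤ : ℕ∞) u) (hc : HasCompactSupport u)
    (hs : tsupport u ⊆ ball (0 : EuclideanSpace ℝ (Fin N)) b \ closure (ball 0 a))
    (hl : ∫ x, ‖fderiv ℝ u x‖ ^ p < l * ∫ x, |u x| ^ p) :
    ∃ (g : ℝ → ℝ) (a' b' : ℝ), Profile a b g a' b' ∧
      ∫ x : EuclideanSpace ℝ (Fin N), |deriv g ‖x‖| ^ p <
        l * ∫ x : EuclideanSpace ℝ (Fin N), |g ‖x‖| ^ p := by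
  have hp0 : 0 ≤ p := by linarith
  have hpne : p ≠ 0 := by linarith
  have hcl : closure (ball (0 : EuclideanSpace ℝ (Fin N)) a) = closedBall 0 a :=
    closure_ball 0 ha.ne'
  rw [hcl] at hs
  have hne : (tsupport u).Nonempty := by
    by_contra hemp
    rw [not_nonempty_iff_eq_empty, tsupport_eq_empty_iff] at hemp
    subst hemp
    simp [Real.zero_rpow hpne] at hl
  obtain ⟨xa, hxa, hmin⟩ := hc.isCompact.exists_isMinOn hne continuous_norm.continuousOn
  obtain ⟨xb, hxb, hmax⟩ := hc.isCompact.exists_isMaxOn hne continuous_norm.continuousOn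
  have hc1 : Continuous fun x => |u x| ^ p :=
    hu.continuous.abs.rpow_const (fun x => Or.inr hp0)
  have hc2 : Continuous fun x => ‖fderiv ℝ u x‖ ^ p :=
    (hu.continuous_fderiv (by simp)).norm.rpow_const (fun x => Or.inr hp0)
  have hi1 : Integrable fun x => |u x| ^ p := by
    apply hc1.integrable_of_hasCompactSupport
    apply HasCompactSupport.intro hc.isCompact
    intro x hx
    simp [image_eq_zero_of_notMem_tsupport hx, Real.zero_rpow hpne]
  have hi2 : Integrable fun x => ‖fderiv ℝ u x‖ ^ p := by
    apply hc2.integrable_of_hasCompactSupport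
    apply HasCompactSupport.intro hc.isCompact
    intro x hx
    have h : x ∉ tsupport (fderiv ℝ u) := fun h => hx (tsupport_fderiv_subset ℝ h)
    simp [image_eq_zero_of_notMem_tsupport h, Real.zero_rpow hpne]
  obtain ⟨ω, hω, hray⟩ := exists_ray (h := fun x => l * |u x| ^ p - ‖fderiv ℝ u x‖ ^ p) (by
      rw [integral_sub (hi1.const_mul l) hi2, integral_const_mul]; linarith)
  set g : ℝ → ℝ := fun r => u (r • ω) with hg
  have hgs : ContDiff ℝ 1 g := by
    apply (hu.of_le (by simp)).comp
    fun_prop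
  have hder : ∀ r, deriv g r = fderiv ℝ u (r • ω) ω := by
    intro r
    have h1 : HasDerivAt (fun r : ℝ => r • ω) ω r := by
      simpa using (hasDerivAt_id r).smul_const ω
    have h2 := ((hu.differentiable (by simp)) (r • ω)).hasFDerivAt.comp_hasDerivAt r h1
    exact h2.deriv
  have hP : Profile a b g ‖xa‖ ‖xb‖ := by
    refine ⟨hgs, ?_, hmin hxb, ?_, ?_⟩
    · have := (hs hxa).2
      simpa using this
    · have := (hs hxb).1
      simpa using this
    · intro r hr hr'
      by_contra hne
      have hmem : r • ω ∈ tsupport u := subset_tsupport u hne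
      have h1 : ‖xa‖ ≤ ‖r • ω‖ := hmin hmem
      have h2 : ‖r • ω‖ ≤ ‖xb‖ := hmax hmem
      have h3 := (hs hmem).2
      rw [mem_closedBall_zero_iff, not_le] at h3
      rw [norm_smul, hω, mul_one, Real.norm_eq_abs] at h1 h2 h3
      have hr0 : 0 ≤ r := by
        by_contra hneg
        rw [abs_of_neg (by linarith)] at h3
        linarith
      rw [abs_of_nonneg hr0] at h1 h2
      exact hr' ⟨h1, h2⟩
  refine ⟨g, _, _, hP, ?_⟩
  have hbig : ∀ r, ‖xb‖ < r → -a < r ∧ r ∉ Icc ‖xa‖ ‖xb‖ := fun r hr =>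
    ⟨by have := norm_nonneg xb; linarith, fun h => absurd h.2 (not_le.2 hr)⟩
  have hI1 : Integrable fun x : EuclideanSpace ℝ (Fin N) => |g ‖x‖| ^ p := by
    apply Continuous.integrable_of_hasCompactSupport
    · exact (hgs.continuous.comp continuous_norm).abs.rpow_const (fun x => Or.inr hp0)
    · apply hasCompactSupport_norm (b := ‖xb‖) (f := fun r => |g r| ^ p)
      intro r hr
      simp only [hP.zero r (hbig r hr).1 (hbig r hr).2, abs_zero, Real.zero_rpow hpne]
  have hI2 : Integrable fun x : EuclideanSpace ℝ (Fin N) => |deriv g ‖x‖| ^ p := by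
    apply Continuous.integrable_of_hasCompactSupport
    · exact ((hgs.continuous_deriv le_rfl).comp continuous_norm).abs.rpow_const
        (fun x => Or.inr hp0)
    · apply hasCompactSupport_norm (b := ‖xb‖) (f := fun r => |deriv g r| ^ p)
      intro r hr
      simp only [hP.deriv_zero r (hbig r hr).1 (hbig r hr).2, abs_zero, Real.zero_rpow hpne]
  have hlt : 0 < ∫ x : EuclideanSpace ℝ (Fin N), (l * |g ‖x‖| ^ p - |deriv g ‖x‖| ^ p) := by
    refine hray.trans_le ?_
    apply integral_mono
    · by_contra h
      rw [integral_undef h] at hray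
      exact lt_irrefl _ hray
    · exact (hI1.const_mul l).sub hI2
    · intro x
      have h1 : |deriv g ‖x‖| ≤ ‖fderiv ℝ u (‖x‖ • ω)‖ := by
        rw [hder, ← Real.norm_eq_abs]
        have := (fderiv ℝ u (‖x‖ • ω)).le_opNorm ω
        rwa [hω, mul_one] at this
      have h2 := Real.rpow_le_rpow (abs_nonneg _) h1 hp0
      simp only [hg] at h2 ⊢
      linarith
  rw [integral_sub (hI1.const_mul l) hI2, integral_const_mul] at hlt
  linarith

end radial

section poincare

variable {N : ℕ}

lemma poincare_one {p : ℝ} (hp : 1 < p) {a b c : ℝ} {g : ℝ → ℝ} (hac : a ≤ c) (hcb : c < b)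
    (hg : ContDiff ℝ 1 g) (hga : g a = 0) :
    (b - a) * (|g c| / (b - a)) ^ p ≤ ∫ r in a..c, |deriv g r| ^ p := by
  have hB : 0 < b - a := by linarith
  set A := |g c| / (b - a) with hA
  have hA0 : 0 ≤ A := by positivity
  have hcd : Continuous (deriv g) := hg.continuous_deriv le_rfl
  have h1 : |g c| ≤ ∫ r in a..c, |deriv g r| := by
    have h2 : ∫ r in a..c, deriv g r = g c - g a :=
      intervalIntegral.integral_deriv_eq_sub
        (fun x _ => (hg.differentiable (by simp)) x) (hcd.intervalIntegrable _ _)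
    have h3 := intervalIntegral.abs_integral_le_integral_abs (f := deriv g) (μ := volume) hac
    rw [h2, hga, sub_zero] at h3
    exact h3
  have hii1 : IntervalIntegrable (fun r => A ^ p + p * A ^ (p - 1) * (|deriv g r| - A))
      volume a c := by
    apply Continuous.intervalIntegrable
    fun_prop
  have hii2 : IntervalIntegrable (fun r => |deriv g r| ^ p) volume a c := by
    apply Continuous.intervalIntegrable
    exact hcd.abs.rpow_const (fun x => Or.inr (by linarith))
  have h4 := intervalIntegral.integral_mono_on hac hii1 hii2
    (fun r _ => tangent_le hp (abs_nonneg (deriv g r)) hA0)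
  refine le_trans ?_ h4
  have h5 : ∫ r in a..c, (A ^ p + p * A ^ (p - 1) * (|deriv g r| - A)) =
      (c - a) * (A ^ p - p * A ^ (p - 1) * A) + p * A ^ (p - 1) * ∫ r in a..c, |deriv g r| := by
    have : (fun r => A ^ p + p * A ^ (p - 1) * (|deriv g r| - A)) =
      fun r => (A ^ p - p * A ^ (p - 1) * A) + p * A ^ (p - 1) * |deriv g r| := by
      ext r; ring
    rw [this, intervalIntegral.integral_add, intervalIntegral.integral_const,
      intervalIntegral.integral_const_mul, smul_eq_mul]
    · exact intervalIntegrable_const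
    · apply Continuous.intervalIntegrable
      fun_prop
  rw [h5]
  have hM : |g c| = A * (b - a) := by rw [hA]; field_simp
  have hAp : A ^ p = A ^ (p - 1) * A := by
    rcases hA0.eq_or_lt with h0 | h0
    · rw [← h0, Real.zero_rpow (by linarith), mul_zero]
    · rw [← Real.rpow_add_one h0.ne', sub_add_cancel]
  have hq : 0 ≤ A ^ (p - 1) := by positivity
  have h6 : p * A ^ (p - 1) * (A * (b - a)) ≤ p * A ^ (p - 1) * ∫ r in a..c, |deriv g r| := by
    rw [← hM]
    exact mul_le_mul_of_nonneg_left h1 (by positivity)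
  rw [hAp]
  have h7 : 0 ≤ (A ^ (p - 1) * A) * ((p - 1) * (b - c)) :=
    mul_nonneg (mul_nonneg hq hA0) (mul_nonneg (by linarith) (by linarith))
  nlinarith [h6, h7]

lemma poincare_radial [Nontrivial (EuclideanSpace ℝ (Fin N))] {p : ℝ} (hp : 1 < p) {a b : ℝ}
    (ha : 0 < a) (hab : a < b) : ∃ κ : ℝ, 0 < κ ∧ ∀ (g : ℝ → ℝ) (a' b' c : ℝ),
      Profile a b g a' b' → c ∈ Icc a' b' →
      κ * |g c| ^ p ≤ ∫ x : EuclideanSpace ℝ (Fin N), |deriv g ‖x‖| ^ p := by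
  set n := Module.finrank ℝ (EuclideanSpace ℝ (Fin N)) with hn
  set V := (volume : Measure (EuclideanSpace ℝ (Fin N))).real (ball 0 1) with hV
  have hVpos : 0 < V := by
    apply ENNReal.toReal_pos
    · exact (measure_ball_pos _ _ one_pos).ne'
    · exact measure_ball_lt_top.ne
  have hnpos : (0 : ℝ) < n := by
    have : 0 < n := Module.finrank_pos
    exact_mod_cast this
  have hB : 0 < b - a := by linarith
  refine ⟨n * (V * (a ^ (n - 1) * ((b - a) / (b - a) ^ p))), by positivity, ?_⟩
  intro g a' b' c hP hc
  have hp0 : 0 ≤ p := by linarith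
  have hac : a ≤ c := hP.ha.le.trans hc.1
  have hcb : c < b := hc.2.trans_lt hP.hb
  have hga : g a = 0 := hP.zero a (by linarith) (fun h => absurd h.1 (not_le.2 hP.ha))
  have h1 := poincare_one hp hac hcb hP.smooth hga
  have hcd : Continuous (deriv g) := hP.smooth.continuous_deriv le_rfl
  have hcp : Continuous (fun r => |deriv g r| ^ p) := hcd.abs.rpow_const (fun x => Or.inr hp0)
  have hfz : ∀ r, b' < r → |deriv g r| ^ p = 0 := by
    intro r hr
    have : 0 < b' := by linarith [hP.ha, hP.hab]
    rw [hP.deriv_zero r (by linarith) (fun h => absurd h.2 (not_le.2 hr)), abs_zero,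
      Real.zero_rpow (by linarith)]
  have hIntA : Integrable (fun x : EuclideanSpace ℝ (Fin N) => |deriv g ‖x‖| ^ p) :=
    (hcp.comp continuous_norm).integrable_of_hasCompactSupport (hasCompactSupport_norm hfz)
  have hIntB := (integrable_fun_norm_addHaar
    (volume : Measure (EuclideanSpace ℝ (Fin N))) (f := fun r => |deriv g r| ^ p)).1 hIntA
  rw [integral_fun_norm_addHaar _ (fun r => |deriv g r| ^ p), nsmul_eq_mul, smul_eq_mul]
  have h2 : a ^ (n - 1) * ((b - a) * (|g c| / (b - a)) ^ p) ≤
      ∫ y in Ioi (0 : ℝ), y ^ (n - 1) • |deriv g y| ^ p := by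
    calc _ ≤ a ^ (n - 1) * ∫ r in a..c, |deriv g r| ^ p :=
          mul_le_mul_of_nonneg_left h1 (by positivity)
      _ = ∫ r in Ioc a c, a ^ (n - 1) * |deriv g r| ^ p := by
          rw [intervalIntegral.integral_of_le hac, integral_const_mul]
      _ ≤ ∫ r in Ioc a c, r ^ (n - 1) • |deriv g r| ^ p := by
          apply setIntegral_mono_on
          · exact (continuous_const.mul hcp).integrableOn_Ioc
          · exact hIntB.mono_set (fun r hr => ha.trans hr.1)
          · exact measurableSet_Ioc
          · intro r hr
            rw [smul_eq_mul]
            apply mul_le_mul_of_nonneg_right _ (by positivity)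
            exact pow_le_pow_left₀ ha.le hr.1.le _
      _ ≤ _ := by
          apply setIntegral_mono_set hIntB
          · filter_upwards [ae_restrict_mem measurableSet_Ioi] with r hr
            have : (0 : ℝ) < r := hr
            simp only [Pi.zero_apply, smul_eq_mul]
            positivity
          · exact (show Ioc a c ⊆ Ioi 0 from fun r hr => ha.trans hr.1).eventuallyLE
  rw [Real.div_rpow (abs_nonneg _) hB.le] at h2
  calc _ = n * (V * (a ^ (n - 1) * ((b - a) * (|g c| ^ p / (b - a) ^ p)))) := by ring
    _ ≤ _ := by
      apply mul_le_mul_of_nonneg_left _ hnpos.le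
      exact mul_le_mul_of_nonneg_left h2 hVpos.le

end poincare

section competitor

variable {N : ℕ}

lemma norm_fderiv_le_of_slope {w : EuclideanSpace ℝ (Fin N) → ℝ} {x : EuclideanSpace ℝ (Fin N)}
    {d : ℝ} (hd : 0 ≤ d)
    (h : ∀ ε > 0, ∀ᶠ y in 𝓝 x, w y - w x ≤ (d + ε) * ‖y - x‖) : ‖fderiv ℝ w x‖ ≤ d := by
  by_cases hw : DifferentiableAt ℝ w x
  · have key : ∀ v, fderiv ℝ w x v ≤ d * ‖v‖ := by
      intro v
      have main : ∀ ε > 0, fderiv ℝ w x v ≤ (d + ε + ε) * ‖v‖ := by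
        intro ε hε
        have h1 := h ε hε
        have h2 := hw.hasFDerivAt.isLittleO.bound hε
        have ht : Tendsto (fun s : ℝ => x + s • v) (𝓝[>] 0) (𝓝 x) := by
          have : Tendsto (fun s : ℝ => x + s • v) (𝓝 0) (𝓝 (x + (0 : ℝ) • v)) := by
            apply Continuous.tendsto
            fun_prop
          rw [zero_smul, add_zero] at this
          exact this.mono_left nhdsWithin_le_nhds
        obtain ⟨s, ⟨hs1, hs2⟩, hs⟩ :=
          ((ht.eventually (h1.and h2)).and self_mem_nhdsWithin).exists
        have hs : 0 < s := hs
        simp only [add_sub_cancel_left, map_smul, norm_smul, Real.norm_eq_abs, abs_of_pos hs,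
          smul_eq_mul] at hs1 hs2
        have h3 := (abs_le.1 hs2).1
        have : s * fderiv ℝ w x v ≤ s * ((d + ε + ε) * ‖v‖) := by linarith
        exact le_of_mul_le_mul_left this hs
      apply le_of_forall_pos_le_add
      intro δ hδ
      have hpos : 0 < 2 * (‖v‖ + 1) := by positivity
      have := main (δ / (2 * (‖v‖ + 1))) (by positivity)
      refine this.trans ?_
      have h4 : δ / (2 * (‖v‖ + 1)) * ‖v‖ ≤ δ / 2 := by
        rw [div_mul_eq_mul_div, div_le_div_iff₀ hpos two_pos]
        nlinarith
      linarith
    apply ContinuousLinearMap.opNorm_le_bound _ hd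
    intro v
    rw [Real.norm_eq_abs, abs_le]
    have h1 := key v
    have h2 := key (-v)
    rw [map_neg, norm_neg] at h2
    exact ⟨by linarith, h1⟩
  · rw [fderiv_zero_of_not_differentiableAt hw, norm_zero]
    exact hd

lemma slope_real {g : ℝ → ℝ} (hg : ContDiff ℝ 1 g) (r : ℝ) {ε : ℝ} (hε : 0 < ε) :
    ∀ᶠ t in 𝓝 r, |g t| - |g r| ≤ (|deriv g r| + ε) * |t - r| := by
  have h1 := ((hg.differentiable (by simp)) r).hasDerivAt.isLittleO.bound hε
  filter_upwards [h1] with t ht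
  simp only [Real.norm_eq_abs, smul_eq_mul] at ht
  have h2 : |g t| ≤ |g t - g r - (t - r) * deriv g r| + |(t - r) * deriv g r| + |g r| := by
    have e : g t = (g t - g r - (t - r) * deriv g r) + (t - r) * deriv g r + g r := by ring
    calc |g t| = |(g t - g r - (t - r) * deriv g r) + (t - r) * deriv g r + g r| := by rw [← e]
      _ ≤ _ := abs_add_three _ _ _
  rw [abs_mul] at h2
  nlinarith

lemma slope_comp {g : ℝ → ℝ} (hg : ContDiff ℝ 1 g) {θ : EuclideanSpace ℝ (Fin N) → ℝ}
    {x : EuclideanSpace ℝ (Fin N)} (hθ : ∀ y, |θ y - θ x| ≤ ‖y - x‖) {ε : ℝ} (hε : 0 < ε) :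
    ∀ᶠ y in 𝓝 x, |g (θ y)| - |g (θ x)| ≤ (|deriv g (θ x)| + ε) * ‖y - x‖ := by
  have ht : Tendsto θ (𝓝 x) (𝓝 (θ x)) := by
    rw [tendsto_iff_norm_sub_tendsto_zero]
    apply squeeze_zero (fun y => norm_nonneg _) hθ
    have : Tendsto (fun y => ‖y - x‖) (𝓝 x) (𝓝 ‖x - x‖) := by
      apply Continuous.tendsto
      fun_prop
    simpa using this
  filter_upwards [ht.eventually (slope_real hg (θ x) hε)] with y hy
  exact hy.trans (mul_le_mul_of_nonneg_left (hθ y) (by positivity))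

lemma lam1_nonneg (p : ℝ) (Ω : Set (EuclideanSpace ℝ (Fin N))) : 0 ≤ lam1 p Ω := by
  apply Real.sInf_nonneg
  rintro r ⟨u, -, -, -, -, rfl⟩
  apply div_nonneg <;> exact integral_nonneg (fun x => by positivity)

lemma norm_sub_lip (z x y : EuclideanSpace ℝ (Fin N)) : |‖y - z‖ - ‖x - z‖| ≤ ‖y - x‖ := by
  have := abs_norm_sub_norm_le (y - z) (x - z)
  rwa [sub_sub_sub_cancel_right] at this

lemma Profile.lip {a b a' b' : ℝ} {g : ℝ → ℝ} (ha : 0 < a) (hP : Profile a b g a' b') :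
    ∃ K : NNReal, ∀ r s, 0 ≤ r → 0 ≤ s → |(|g r| - |g s|)| ≤ K * |r - s| := by
  have hcd : Continuous (deriv g) := hP.smooth.continuous_deriv le_rfl
  obtain ⟨C, hC⟩ := (isCompact_Icc (a := a') (b := b')).exists_bound_of_continuousOn
    hcd.continuousOn
  refine ⟨C.toNNReal, fun r s hr hs => ?_⟩
  have h1 : LipschitzOnWith C.toNNReal g (Ici 0) := by
    apply Convex.lipschitzOnWith_of_nnnorm_deriv_le (𝕜 := ℝ)
      (fun x _ => (hP.smooth.differentiable (by simp)) x) _ (convex_Ici 0)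
    intro x hx
    have hx : 0 ≤ x := hx
    by_cases hxm : x ∈ Icc a' b'
    · rw [← NNReal.coe_le_coe, coe_nnnorm]
      exact (hC x hxm).trans (Real.le_coe_toNNReal C)
    · rw [hP.deriv_zero x (by linarith) hxm, nnnorm_zero]
      exact zero_le
  refine (abs_abs_sub_abs_le _ _).trans ?_
  exact h1.dist_le_mul r hr s hs

end competitor

section competitor2

variable {N : ℕ}

/-- The key competitor estimate. -/
lemma competitor {p : ℝ} (hp : 1 < p) {a b a' b' c t : ℝ} {g : ℝ → ℝ} (ha : 0 < a)
    (hP : Profile a b g a' b') (hc : c ∈ Icc a' b') (hmax : ∀ r, 0 ≤ r → |g r| ≤ |g c|)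
    (z1 z2 : EuclideanSpace ℝ (Fin N)) (ht : ‖z2 - z1‖ = t) (ht0 : 0 < t) (hta : t ≤ a)
    {η : ℝ} (hη : 0 ≤ η) :
    lam1 p (ball z2 b \ closure (ball z1 a)) *
      ((∫ x : EuclideanSpace ℝ (Fin N), |g ‖x‖| ^ p) + p * η * |g c| ^ p *
        ∫ x : EuclideanSpace ℝ (Fin N), max 0 (t / 4 - ‖x‖)) ≤
      (∫ x : EuclideanSpace ℝ (Fin N), |deriv g ‖x‖| ^ p) + (η * |g c|) ^ p *
        (volume : Measure (EuclideanSpace ℝ (Fin N))).real (closedBall 0 (t / 4)) := by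
  have hp0 : 0 ≤ p := by linarith
  have hpne : p ≠ 0 := by linarith
  set M := |g c| with hM
  have hM0 : 0 ≤ M := abs_nonneg _
  set ρ := t / 4 with hρ
  have hac : a < c := hP.ha.trans_le hc.1
  have hcb : c < b := hc.2.trans_lt hP.hb
  have hc0 : 0 < c := ha.trans hac
  -- centre of the bump
  set x0 := z1 + ((c + t / 2) / t) • (z2 - z1) with hx0
  have hx01 : ‖x0 - z1‖ = c + t / 2 := by
    rw [hx0, add_sub_cancel_left, norm_smul, ht, Real.norm_eq_abs, abs_of_pos (by positivity)]
    field_simp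
  have hx02 : ‖x0 - z2‖ = c - t / 2 := by
    have : x0 - z2 = ((c - t / 2) / t) • (z2 - z1) := by
      have e : (c + t / 2) / t = (c - t / 2) / t + 1 := by field_simp; ring
      rw [hx0, e, add_smul, one_smul]; abel
    rw [this, norm_smul, ht, Real.norm_eq_abs, abs_of_pos (div_pos (by linarith) ht0)]
    field_simp
  have hball1 : ∀ x, ‖x - x0‖ ≤ ρ → c < ‖x - z1‖ := by
    intro x hx
    have h1 := norm_sub_lip z1 x0 x
    rw [hx01] at h1
    have := (abs_le.1 h1).1
    linarith
  have hball2 : ∀ x, ‖x - x0‖ ≤ ρ → ‖x - z2‖ < c := by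
    intro x hx
    have h1 := norm_sub_lip z2 x0 x
    rw [hx02] at h1
    have := (abs_le.1 h1).2
    linarith
  obtain ⟨K, hK⟩ := hP.lip ha
  set θ1 : EuclideanSpace ℝ (Fin N) → ℝ := fun x => min ‖x - z1‖ c with hθ1
  set θ2 : EuclideanSpace ℝ (Fin N) → ℝ := fun x => max ‖x - z2‖ c with hθ2
  have hLipA : ∀ x y, |θ1 y - θ1 x| ≤ ‖y - x‖ := fun x y =>
    (abs_min_sub_min_le_max _ _ _ _).trans (by simpa using norm_sub_lip z1 x y)
  have hLipB : ∀ x y, |θ2 y - θ2 x| ≤ ‖y - x‖ := fun x y =>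
    (abs_max_sub_max_le_max _ _ _ _).trans (by simpa using norm_sub_lip z2 x y)
  have hθ10 : ∀ x, 0 ≤ θ1 x := fun x => le_min (norm_nonneg _) hc0.le
  have hθ20 : ∀ x, 0 ≤ θ2 x := fun x => hc0.le.trans (le_max_right _ _)
  set P1 : EuclideanSpace ℝ (Fin N) → ℝ := fun x => |g (θ1 x)| with hP1
  set P2 : EuclideanSpace ℝ (Fin N) → ℝ := fun x => |g (θ2 x)| with hP2
  have hP1M : ∀ x, P1 x ≤ M := fun x => hmax _ (hθ10 x)
  have hP2M : ∀ x, P2 x ≤ M := fun x => hmax _ (hθ20 x)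
  have hP10 : ∀ x, 0 ≤ P1 x := fun x => abs_nonneg _
  have hP20 : ∀ x, 0 ≤ P2 x := fun x => abs_nonneg _
  have hP1eq : ∀ x, c ≤ ‖x - z1‖ → P1 x = M := fun x hx => by
    simp only [hP1, hθ1, min_eq_right hx, hM]
  have hP2eq : ∀ x, ‖x - z2‖ ≤ c → P2 x = M := fun x hx => by
    simp only [hP2, hθ2, max_eq_right hx, hM]
  have hP1lip : LipschitzWith K P1 := LipschitzWith.of_dist_le_mul fun x y => by
    rw [Real.dist_eq, dist_eq_norm]
    exact (hK _ _ (hθ10 x) (hθ10 y)).trans (mul_le_mul_of_nonneg_left (hLipA y x) K.coe_nonneg)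
  have hP2lip : LipschitzWith K P2 := LipschitzWith.of_dist_le_mul fun x y => by
    rw [Real.dist_eq, dist_eq_norm]
    exact (hK _ _ (hθ20 x) (hθ20 y)).trans (mul_le_mul_of_nonneg_left (hLipB y x) K.coe_nonneg)
  set φ : EuclideanSpace ℝ (Fin N) → ℝ := fun x => max 0 (ρ - ‖x - x0‖) with hφ
  have hφ0 : ∀ x, 0 ≤ φ x := fun x => le_max_left _ _
  have hφl : ∀ x y, |φ y - φ x| ≤ ‖y - x‖ := fun x y => by
    refine (abs_max_sub_max_le_max _ _ _ _).trans ?_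
    have e : ρ - ‖y - x0‖ - (ρ - ‖x - x0‖) = -(‖y - x0‖ - ‖x - x0‖) := by ring
    rw [e, abs_neg]
    simpa using norm_sub_lip x0 x y
  have hφz : ∀ x, ρ ≤ ‖x - x0‖ → φ x = 0 := fun x hx => max_eq_left (by linarith)
  set w : EuclideanSpace ℝ (Fin N) → ℝ := fun x => min (P1 x) (P2 x) + η * M * φ x with hw
  have hηM : 0 ≤ η * M := mul_nonneg hη hM0
  have hw0 : ∀ x, 0 ≤ w x := fun x =>
    add_nonneg (le_min (hP10 x) (hP20 x)) (mul_nonneg hηM (hφ0 x))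
  have hwlip : LipschitzWith (max K K + (η * M).toNNReal) w := by
    apply (hP1lip.min hP2lip).add
    apply LipschitzWith.of_dist_le_mul
    intro x y
    rw [Real.dist_eq, dist_eq_norm, ← mul_sub, abs_mul, abs_of_nonneg hηM,
      Real.coe_toNNReal _ hηM]
    exact mul_le_mul_of_nonneg_left (hφl y x) hηM
  -- support
  set C : Set (EuclideanSpace ℝ (Fin N)) := {x | a' ≤ ‖x - z1‖} ∩ closedBall z2 b' with hC
  have hCc : IsCompact C := by
    apply (isCompact_closedBall z2 b').inter_left
    exact isClosed_le continuous_const (by fun_prop)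
  have hwC : ∀ x, x ∉ C → w x = 0 := by
    intro x hx
    have hφx : φ x = 0 := by
      apply hφz
      by_contra hlt
      rw [not_le] at hlt
      apply hx
      refine ⟨hc.1.trans (hball1 x hlt.le).le, ?_⟩
      rw [mem_closedBall, dist_eq_norm]
      exact (hball2 x hlt.le).le.trans hc.2
    have hmin : min (P1 x) (P2 x) = 0 := by
      by_cases h1 : a' ≤ ‖x - z1‖
      · have h2 : b' < ‖x - z2‖ := by
          by_contra h2
          rw [not_lt] at h2
          exact hx ⟨h1, by rwa [mem_closedBall, dist_eq_norm]⟩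
        have : P2 x = 0 := by
          simp only [hP2, abs_eq_zero]
          apply hP.zero _ (by linarith [hθ20 x])
          intro h
          exact absurd ((le_max_left _ _).trans h.2) (not_le.2 h2)
        rw [this]; exact min_eq_right (hP10 x)
      · rw [not_le] at h1
        have : P1 x = 0 := by
          simp only [hP1, abs_eq_zero]
          apply hP.zero _ (by linarith [hθ10 x])
          intro h
          exact absurd (h.1.trans (min_le_left _ _)) (not_le.2 h1)
        rw [this]; exact min_eq_left (hP20 x)
    simp only [hw, hφx, hmin, mul_zero, add_zero]
  have hwcs : HasCompactSupport w := HasCompactSupport.intro hCc hwC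
  have hCΩ : C ⊆ ball z2 b \ closure (ball z1 a) := by
    intro x hx
    rw [closure_ball z1 ha.ne']
    refine ⟨?_, ?_⟩
    · have := hx.2
      rw [mem_closedBall] at this
      exact this.trans_lt hP.hb
    · rw [mem_closedBall, dist_eq_norm, not_le]
      exact hP.ha.trans_le hx.1
  have hwts : tsupport w ⊆ ball z2 b \ closure (ball z1 a) := by
    refine Subset.trans ?_ hCΩ
    apply closure_minimal _ hCc.isClosed
    intro x hx
    by_contra h
    exact hx (hwC x h)
  have hopen : IsOpen (ball z2 b \ closure (ball z1 a)) := isOpen_ball.sdiff isClosed_closure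
  -- gradient bound
  set d1 : ℝ → ℝ := fun r => if r < c then |deriv g r| ^ p else 0 with hd1
  set d2 : ℝ → ℝ := fun r => if r < c then 0 else |deriv g r| ^ p with hd2
  have hd10 : ∀ r, 0 ≤ d1 r := fun r => by simp only [hd1]; split_ifs <;> positivity
  have hd20 : ∀ r, 0 ≤ d2 r := fun r => by simp only [hd2]; split_ifs <;> positivity
  have hgrad : ∀ x, ‖fderiv ℝ w x‖ ^ p ≤ d1 ‖x - z1‖ + d2 ‖x - z2‖ +
      (closedBall x0 ρ).indicator (fun _ => (η * M) ^ p) x := by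
    intro x
    by_cases hxb : x ∈ closedBall x0 ρ
    · rw [indicator_of_mem hxb]
      rw [mem_closedBall, dist_eq_norm] at hxb
      have h1 : ‖fderiv ℝ w x‖ ≤ η * M := by
        apply norm_fderiv_le_of_lip' ℝ hηM
        have hm1 : ∀ᶠ y in 𝓝 x, c < ‖y - z1‖ :=
          (isOpen_lt continuous_const (by fun_prop)).mem_nhds (hball1 x hxb)
        have hm2 : ∀ᶠ y in 𝓝 x, ‖y - z2‖ < c :=
          (isOpen_lt (by fun_prop) continuous_const).mem_nhds (hball2 x hxb)
        filter_upwards [hm1, hm2] with y hy1 hy2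
        simp only [hw]
        rw [hP1eq y hy1.le, hP2eq y hy2.le, hP1eq x (hball1 x hxb).le, hP2eq x (hball2 x hxb).le,
          add_sub_add_left_eq_sub, ← mul_sub, Real.norm_eq_abs, abs_mul, abs_of_nonneg hηM]
        exact mul_le_mul_of_nonneg_left (hφl x y) hηM
      have h2 := Real.rpow_le_rpow (norm_nonneg _) h1 hp0
      linarith [hd10 ‖x - z1‖, hd20 ‖x - z2‖]
    · rw [indicator_of_notMem hxb, add_zero]
      have hwv : ∀ᶠ y in 𝓝 x, w y = min (P1 y) (P2 y) := by
        filter_upwards [isClosed_closedBall.isOpen_compl.mem_nhds hxb] with y hy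
        rw [mem_compl_iff, mem_closedBall, dist_eq_norm, not_le] at hy
        simp only [hw, hφz y hy.le, mul_zero, add_zero]
      have hwx := hwv.self_of_nhds
      rcases le_total (P1 x) (P2 x) with hle | hle
      · rw [min_eq_left hle] at hwx
        by_cases hr : ‖x - z1‖ < c
        · have hθx : θ1 x = ‖x - z1‖ := min_eq_left hr.le
          have h1 : ‖fderiv ℝ w x‖ ≤ |deriv g ‖x - z1‖| := by
            apply norm_fderiv_le_of_slope (abs_nonneg _)
            intro ε hε
            filter_upwards [hwv, slope_comp hP.smooth (hLipA x) hε] with y hy1 hy2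
            rw [hθx] at hy2
            rw [hy1, hwx]
            refine le_trans ?_ hy2
            have h3 : P1 x = |g ‖x - z1‖| := by simp only [hP1, hθx]
            rw [h3]
            exact sub_le_sub_right (min_le_left _ _) _
          have h2 := Real.rpow_le_rpow (norm_nonneg _) h1 hp0
          have h3 : d1 ‖x - z1‖ = |deriv g ‖x - z1‖| ^ p := by simp only [hd1, hr, if_true]
          linarith [hd20 ‖x - z2‖]
        · rw [not_lt] at hr
          have h1 : ‖fderiv ℝ w x‖ ≤ 0 := by
            apply norm_fderiv_le_of_slope le_rfl
            intro ε hε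
            filter_upwards [hwv] with y hy1
            rw [hy1, hwx, hP1eq x hr]
            have h3 := (min_le_left (P1 y) (P2 y)).trans (hP1M y)
            have : 0 ≤ (0 + ε) * ‖y - x‖ := by positivity
            linarith
          have h2 : ‖fderiv ℝ w x‖ = 0 := le_antisymm h1 (norm_nonneg _)
          rw [h2, Real.zero_rpow hpne]
          exact add_nonneg (hd10 _) (hd20 _)
      · rw [min_eq_right hle] at hwx
        by_cases hr : ‖x - z2‖ < c
        · have h1 : ‖fderiv ℝ w x‖ ≤ 0 := by
            apply norm_fderiv_le_of_slope le_rfl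
            intro ε hε
            filter_upwards [hwv] with y hy1
            rw [hy1, hwx, hP2eq x hr.le]
            have h3 := (min_le_right (P1 y) (P2 y)).trans (hP2M y)
            have : 0 ≤ (0 + ε) * ‖y - x‖ := by positivity
            linarith
          have h2 : ‖fderiv ℝ w x‖ = 0 := le_antisymm h1 (norm_nonneg _)
          rw [h2, Real.zero_rpow hpne]
          exact add_nonneg (hd10 _) (hd20 _)
        · have hθx : θ2 x = ‖x - z2‖ := max_eq_left (not_lt.1 hr)
          have h1 : ‖fderiv ℝ w x‖ ≤ |deriv g ‖x - z2‖| := by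
            apply norm_fderiv_le_of_slope (abs_nonneg _)
            intro ε hε
            filter_upwards [hwv, slope_comp hP.smooth (hLipB x) hε] with y hy1 hy2
            rw [hθx] at hy2
            rw [hy1, hwx]
            refine le_trans ?_ hy2
            have h3 : P2 x = |g ‖x - z2‖| := by simp only [hP2, hθx]
            rw [h3]
            exact sub_le_sub_right (min_le_right _ _) _
          have h2 := Real.rpow_le_rpow (norm_nonneg _) h1 hp0
          have h3 : d2 ‖x - z2‖ = |deriv g ‖x - z2‖| ^ p := by simp only [hd2, hr, if_false]
          linarith [hd10 ‖x - z1‖]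
  -- energy integral
  have hb'0 : 0 < b' := hc0.trans_le hc.2
  have hcd : Continuous (deriv g) := hP.smooth.continuous_deriv le_rfl
  have hcp : Continuous (fun r => |deriv g r| ^ p) := hcd.abs.rpow_const (fun x => Or.inr hp0)
  have hgp : Continuous (fun r => |g r| ^ p) :=
    hP.smooth.continuous.abs.rpow_const (fun x => Or.inr hp0)
  have hzero : ∀ r, b' < r → g r = 0 := fun r hr =>
    hP.zero r (by linarith) (fun h => absurd h.2 (not_le.2 hr))
  have hEint : Integrable (fun x : EuclideanSpace ℝ (Fin N) => |deriv g ‖x‖| ^ p) := by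
    apply (hcp.comp continuous_norm).integrable_of_hasCompactSupport
    apply hasCompactSupport_norm (b := b') (f := fun r => |deriv g r| ^ p)
    intro r hr
    simp only [hP.deriv_zero r (by linarith) (fun h => absurd h.2 (not_le.2 hr)), abs_zero,
      Real.zero_rpow hpne]
  have hd1m : Measurable d1 := Measurable.ite measurableSet_Iio hcp.measurable measurable_const
  have hd2m : Measurable d2 := Measurable.ite measurableSet_Iio measurable_const hcp.measurable
  have hd1i : Integrable (fun x : EuclideanSpace ℝ (Fin N) => d1 ‖x‖) := by
    apply hEint.mono' (hd1m.comp measurable_norm).aestronglyMeasurable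
    refine Eventually.of_forall fun x => ?_
    rw [Real.norm_eq_abs]
    change |d1 ‖x‖| ≤ _
    rw [abs_of_nonneg (hd10 _)]
    simp only [hd1]
    split_ifs
    · exact le_rfl
    · positivity
  have hd2i : Integrable (fun x : EuclideanSpace ℝ (Fin N) => d2 ‖x‖) := by
    apply hEint.mono' (hd2m.comp measurable_norm).aestronglyMeasurable
    refine Eventually.of_forall fun x => ?_
    rw [Real.norm_eq_abs]
    change |d2 ‖x‖| ≤ _
    rw [abs_of_nonneg (hd20 _)]
    simp only [hd2]
    split_ifs
    · positivity
    · exact le_rfl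
  have hIi : Integrable ((closedBall x0 ρ).indicator (fun _ => (η * M) ^ p)) :=
    (integrable_indicator_iff measurableSet_closedBall).2
      (integrableOn_const measure_closedBall_lt_top.ne)
  have hds : Integrable (fun x => d1 ‖x - z1‖ + d2 ‖x - z2‖) :=
    (hd1i.comp_sub_right z1).add (hd2i.comp_sub_right z2)
  have hEw : ∫ x, ‖fderiv ℝ w x‖ ^ p ≤ (∫ x : EuclideanSpace ℝ (Fin N), |deriv g ‖x‖| ^ p) +
      (η * M) ^ p * (volume : Measure (EuclideanSpace ℝ (Fin N))).real (closedBall 0 ρ) := by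
    calc ∫ x, ‖fderiv ℝ w x‖ ^ p ≤ ∫ x, (d1 ‖x - z1‖ + d2 ‖x - z2‖ +
          (closedBall x0 ρ).indicator (fun _ => (η * M) ^ p) x) := by
          apply integral_mono_of_nonneg
          · exact Eventually.of_forall fun x => by simp only [Pi.zero_apply]; positivity
          · exact ((hd1i.comp_sub_right z1).add (hd2i.comp_sub_right z2)).add hIi
          · exact Eventually.of_forall hgrad
      _ = ((∫ x : EuclideanSpace ℝ (Fin N), d1 ‖x‖) + ∫ x : EuclideanSpace ℝ (Fin N), d2 ‖x‖) +
          (η * M) ^ p * (volume : Measure (EuclideanSpace ℝ (Fin N))).real (closedBall 0 ρ) := by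
          rw [integral_add hds hIi,
            integral_add (hd1i.comp_sub_right z1) (hd2i.comp_sub_right z2),
            integral_sub_right_eq_self (fun x => d1 ‖x‖) z1,
            integral_sub_right_eq_self (fun x => d2 ‖x‖) z2,
            integral_indicator measurableSet_closedBall, setIntegral_const, smul_eq_mul, mul_comm]
          congr 2
          simp only [Measure.real]
          rw [Measure.addHaar_closedBall_center]
      _ = _ := by
          rw [← integral_add hd1i hd2i]
          congr 2
          ext x
          simp only [hd1, hd2]
          split_ifs <;> simp
  -- mass integral
  set f1 : ℝ → ℝ := fun r => |g (min r c)| ^ p - M ^ p with hf1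
  set f2 : ℝ → ℝ := fun r => |g (max r c)| ^ p with hf2
  have hf1i : Integrable (fun x : EuclideanSpace ℝ (Fin N) => f1 ‖x‖) := by
    apply Continuous.integrable_of_hasCompactSupport
    · have : Continuous f1 :=
        (hgp.comp (continuous_id.min continuous_const)).sub continuous_const
      exact this.comp continuous_norm
    · apply hasCompactSupport_norm (b := c)
      intro r hr
      simp only [hf1, min_eq_right hr.le, hM, sub_self]
  have hf2i : Integrable (fun x : EuclideanSpace ℝ (Fin N) => f2 ‖x‖) := by
    apply Continuous.integrable_of_hasCompactSupport
    · have : Continuous f2 := hgp.comp (continuous_id.max continuous_const)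
      exact this.comp continuous_norm
    · apply hasCompactSupport_norm (b := b')
      intro r hr
      simp only [hf2, hzero _ (hr.trans_le (le_max_left r c)), abs_zero, Real.zero_rpow hpne]
  have hTc : Continuous (fun x : EuclideanSpace ℝ (Fin N) => max 0 (ρ - ‖x‖)) := by fun_prop
  have hTi : Integrable (fun x : EuclideanSpace ℝ (Fin N) => max 0 (ρ - ‖x‖)) := by
    apply hTc.integrable_of_hasCompactSupport
    apply hasCompactSupport_norm (b := ρ) (f := fun r => max 0 (ρ - r))
    intro r hr
    exact max_eq_left (by linarith)
  have hwint : Integrable (fun x => |w x| ^ p) := by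
    apply (hwlip.continuous.abs.rpow_const (fun x => Or.inr hp0)).integrable_of_hasCompactSupport
    apply HasCompactSupport.intro hCc
    intro x hx
    simp [hwC x hx, Real.zero_rpow hpne]
  have hmass : ∀ x, f1 ‖x - z1‖ + f2 ‖x - z2‖ + p * η * M ^ p * max 0 (ρ - ‖x - x0‖) ≤
      |w x| ^ p := by
    intro x
    have e1 : f1 ‖x - z1‖ = P1 x ^ p - M ^ p := rfl
    have e2 : f2 ‖x - z2‖ = P2 x ^ p := rfl
    have e3 : max 0 (ρ - ‖x - x0‖) = φ x := rfl
    rw [e1, e2, e3, abs_of_nonneg (hw0 x)]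
    have hm1 := Real.rpow_le_rpow (hP10 x) (hP1M x) hp0
    have hm2 := Real.rpow_le_rpow (hP20 x) (hP2M x) hp0
    by_cases hx : ‖x - x0‖ < ρ
    · have h1 := hP1eq x (hball1 x hx.le).le
      have h2 := hP2eq x (hball2 x hx.le).le
      have h3 : w x = M * (1 + η * φ x) := by
        simp only [hw, h1, h2, min_self]; ring
      have h4 : 0 ≤ η * φ x := mul_nonneg hη (hφ0 x)
      have h5 := one_add_mul_self_le_rpow_one_add (s := η * φ x) (by linarith) hp.le
      rw [h1, h2, h3, Real.mul_rpow hM0 (by linarith)]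
      have h6 := mul_le_mul_of_nonneg_left h5 (Real.rpow_nonneg hM0 p)
      linarith
    · rw [not_lt] at hx
      have h1 := hφz x hx
      have h3 : w x = min (P1 x) (P2 x) := by simp only [hw, h1, mul_zero, add_zero]
      rw [h1, h3, mul_zero, add_zero]
      rcases le_total (P1 x) (P2 x) with hle | hle
      · rw [min_eq_left hle]; linarith
      · rw [min_eq_right hle]; linarith
  have hfs : Integrable (fun x => f1 ‖x - z1‖ + f2 ‖x - z2‖) :=
    (hf1i.comp_sub_right z1).add (hf2i.comp_sub_right z2)
  have hMw : (∫ x : EuclideanSpace ℝ (Fin N), |g ‖x‖| ^ p) + p * η * M ^ p *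
        ∫ x : EuclideanSpace ℝ (Fin N), max 0 (ρ - ‖x‖) ≤ ∫ x, |w x| ^ p := by
    have hTi' : Integrable (fun x : EuclideanSpace ℝ (Fin N) =>
        p * η * M ^ p * max 0 (ρ - ‖x - x0‖)) := (hTi.comp_sub_right x0).const_mul _
    calc _ = ∫ x, (f1 ‖x - z1‖ + f2 ‖x - z2‖ + p * η * M ^ p * max 0 (ρ - ‖x - x0‖)) := by
          rw [integral_add hfs hTi',
            integral_add (hf1i.comp_sub_right z1) (hf2i.comp_sub_right z2),
            integral_sub_right_eq_self (fun x => f1 ‖x‖) z1,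
            integral_sub_right_eq_self (fun x => f2 ‖x‖) z2, integral_const_mul,
            integral_sub_right_eq_self (fun x => max 0 (ρ - ‖x‖)) x0,
            ← integral_add hf1i hf2i]
          congr 2
          ext x
          simp only [hf1, hf2]
          rcases le_total ‖x‖ c with h | h
          · rw [min_eq_left h, max_eq_right h, ← hM]; ring
          · rw [min_eq_right h, max_eq_left h, ← hM]; ring
      _ ≤ _ := by
          apply integral_mono _ hwint hmass
          exact ((hf1i.comp_sub_right z1).add (hf2i.comp_sub_right z2)).add hTi'
  calc _ ≤ lam1 p (ball z2 b \ closure (ball z1 a)) * ∫ x, |w x| ^ p :=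
        mul_le_mul_of_nonneg_left hMw (lam1_nonneg _ _)
    _ ≤ ∫ x, ‖fderiv ℝ w x‖ ^ p := lam1_mul_le_lip hp hopen hwlip hwcs hwts
    _ ≤ _ := hEw

end competitor2

section final

variable {N : ℕ}

lemma strict_lt [Nontrivial (EuclideanSpace ℝ (Fin N))] {p : ℝ} (hp : 1 < p) {a b t : ℝ}
    (ha : 0 < a) (hab : a < b) (z1 z2 : EuclideanSpace ℝ (Fin N)) (ht : ‖z2 - z1‖ = t)
    (ht0 : 0 < t) (hta : t ≤ a) :
    lam1 p (ball z2 b \ closure (ball z1 a)) <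
      lam1 p (ball (0 : EuclideanSpace ℝ (Fin N)) b \ closure (ball 0 a)) := by
  have hp0 : 0 ≤ p := by linarith
  have hpne : p ≠ 0 := by linarith
  set L := lam1 p (ball (0 : EuclideanSpace ℝ (Fin N)) b \ closure (ball 0 a)) with hL
  have hopen : IsOpen (ball (0 : EuclideanSpace ℝ (Fin N)) b \ closure (ball 0 a)) :=
    isOpen_ball.sdiff isClosed_closure
  have hne : (ball (0 : EuclideanSpace ℝ (Fin N)) b \ closure (ball 0 a)).Nonempty := by
    obtain ⟨x, hx⟩ := exists_norm_eq (EuclideanSpace ℝ (Fin N)) (c := (a + b) / 2) (by linarith)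
    refine ⟨x, ?_, ?_⟩
    · rw [mem_ball_zero_iff, hx]; linarith
    · rw [closure_ball _ ha.ne', mem_closedBall_zero_iff, hx]; linarith
  set W := (volume : Measure (EuclideanSpace ℝ (Fin N))).real (closedBall 0 b) with hW
  have hWpos : 0 < W := ENNReal.toReal_pos
    (measure_closedBall_pos _ _ (by linarith)).ne' measure_closedBall_lt_top.ne
  have key : ∀ l, L < l → ∃ (g : ℝ → ℝ) (a' b' c : ℝ), Profile a b g a' b' ∧ c ∈ Icc a' b' ∧
      (∀ r, 0 ≤ r → |g r| ≤ |g c|) ∧ 0 < |g c| ∧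
      (∫ x : EuclideanSpace ℝ (Fin N), |g ‖x‖| ^ p) ≤ |g c| ^ p * W ∧
      ∫ x : EuclideanSpace ℝ (Fin N), |deriv g ‖x‖| ^ p <
        l * ∫ x : EuclideanSpace ℝ (Fin N), |g ‖x‖| ^ p := by
    intro l hl
    have hl0 : 0 ≤ l := (lam1_nonneg _ _).trans hl.le
    obtain ⟨u, hu, huc, hus, hul⟩ := lam1_lt_exists hp hopen hne hl
    obtain ⟨g, a', b', hP, hE⟩ := exists_profile hp ha hu huc hus hul
    obtain ⟨c, hc, hcm⟩ := isCompact_Icc.exists_isMaxOn (nonempty_Icc.2 hP.hab)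
      (hP.smooth.continuous.abs.continuousOn (s := Icc a' b'))
    have hmax : ∀ r, 0 ≤ r → |g r| ≤ |g c| := by
      intro r hr
      by_cases h : r ∈ Icc a' b'
      · exact hcm h
      · rw [hP.zero r (by linarith) h, abs_zero]; positivity
    have hm : (∫ x : EuclideanSpace ℝ (Fin N), |g ‖x‖| ^ p) ≤ |g c| ^ p * W := by
      calc (∫ x : EuclideanSpace ℝ (Fin N), |g ‖x‖| ^ p) ≤
          ∫ x, (closedBall (0 : EuclideanSpace ℝ (Fin N)) b).indicator (fun _ => |g c| ^ p) x := by
            apply integral_mono_of_nonneg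
            · exact Eventually.of_forall fun x => by simp only [Pi.zero_apply]; positivity
            · exact (integrable_indicator_iff measurableSet_closedBall).2
                (integrableOn_const measure_closedBall_lt_top.ne)
            · refine Eventually.of_forall fun x => ?_
              by_cases hx : x ∈ closedBall (0 : EuclideanSpace ℝ (Fin N)) b
              · simp only [indicator_of_mem hx]
                exact Real.rpow_le_rpow (abs_nonneg _) (hmax _ (norm_nonneg _)) hp0
              · simp only [indicator_of_notMem hx]
                rw [mem_closedBall_zero_iff, not_le] at hx
                rw [hP.zero _ (by linarith [norm_nonneg x])
                  (fun h => by linarith [h.2, hP.hb]), abs_zero, Real.zero_rpow hpne]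
        _ = _ := by
            rw [integral_indicator measurableSet_closedBall, setIntegral_const, smul_eq_mul,
              mul_comm]
    refine ⟨g, a', b', c, hP, hc, hmax, ?_, hm, hE⟩
    by_contra h0
    have h1 : |g c| = 0 := le_antisymm (not_lt.1 h0) (abs_nonneg _)
    rw [h1, Real.zero_rpow hpne, zero_mul] at hm
    have h2 : 0 ≤ ∫ x : EuclideanSpace ℝ (Fin N), |deriv g ‖x‖| ^ p :=
      integral_nonneg fun x => by positivity
    have h3 := mul_nonpos_of_nonneg_of_nonpos hl0 hm
    linarith
  have hLpos : 0 < L := by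
    obtain ⟨κ, hκ, hκP⟩ := poincare_radial (N := N) hp ha hab
    refine lt_of_lt_of_le (div_pos hκ hWpos) (le_of_forall_gt_imp_ge_of_dense fun l hl => ?_)
    obtain ⟨g, a', b', c, hP, hc, hmax, hM, hm, hE⟩ := key l hl
    have hl0 : 0 ≤ l := (lam1_nonneg _ _).trans hl.le
    have h1 := hκP g a' b' c hP hc
    have hMp : 0 < |g c| ^ p := Real.rpow_pos_of_pos hM p
    have h2 := mul_le_mul_of_nonneg_left hm hl0
    have h3 : κ * |g c| ^ p ≤ (l * W) * |g c| ^ p := by nlinarith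
    rw [div_le_iff₀ hWpos]
    exact le_of_mul_le_mul_right h3 hMp
  set C1 := (volume : Measure (EuclideanSpace ℝ (Fin N))).real (closedBall 0 (t / 4)) with hC1
  have hC10 : 0 ≤ C1 := measureReal_nonneg
  set C2 := ∫ x : EuclideanSpace ℝ (Fin N), max 0 (t / 4 - ‖x‖) with hC2
  have hC20 : 0 < C2 := by
    have hTc : Continuous (fun x : EuclideanSpace ℝ (Fin N) => max 0 (t / 4 - ‖x‖)) := by fun_prop
    apply hTc.integral_pos_of_hasCompactSupport_nonneg_nonzero (x := 0)
    · apply hasCompactSupport_norm (b := t / 4) (f := fun r => max 0 (t / 4 - r))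
      intro r hr
      exact max_eq_left (by linarith)
    · intro x; exact le_max_left _ _
    · simp only [norm_zero, sub_zero]
      exact (lt_max_of_lt_right (by linarith)).ne'
  -- choice of η
  obtain ⟨η, hη0, hη⟩ : ∃ η : ℝ, 0 < η ∧ η ^ p * C1 < L * p * η * C2 / 2 := by
    have h1 : Tendsto (fun η : ℝ => η ^ (p - 1) * C1) (𝓝[>] 0) (𝓝 0) := by
      have h2 : ContinuousAt (fun η : ℝ => η ^ (p - 1) * C1) 0 :=
        (Real.continuousAt_rpow_const _ _ (Or.inr (by linarith))).mul continuousAt_const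
      have h3 := h2.tendsto
      simp only [Real.zero_rpow (by linarith : p - 1 ≠ 0), zero_mul] at h3
      exact h3.mono_left nhdsWithin_le_nhds
    have hpos : 0 < L * p * C2 / 2 := by positivity
    obtain ⟨η, h4, h5⟩ := ((h1.eventually (gt_mem_nhds hpos)).and self_mem_nhdsWithin).exists
    have h5' : 0 < η := h5
    refine ⟨η, h5', ?_⟩
    have h6 : η ^ p = η * η ^ (p - 1) := by
      rw [Real.rpow_sub_one h5'.ne']; field_simp
    rw [h6]
    have := mul_lt_mul_of_pos_left h4 h5'
    linarith
  by_contra hcon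
  rw [not_lt] at hcon
  set ε := L * p * η * C2 / 2 / W with hε
  have hεpos : 0 < ε := by positivity
  have hεW : ε * W = L * p * η * C2 / 2 := by rw [hε]; field_simp
  obtain ⟨g, a', b', c, hP, hc, hmax, hM, hm, hE⟩ := key (L + ε) (by linarith)
  have hcomp := competitor hp ha hP hc hmax z1 z2 ht ht0 hta hη0.le
  rw [← hC1, ← hC2, Real.mul_rpow hη0.le hM.le] at hcomp
  have hMp : 0 < |g c| ^ p := Real.rpow_pos_of_pos hM p
  have hm0 : 0 ≤ ∫ x : EuclideanSpace ℝ (Fin N), |g ‖x‖| ^ p :=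
    integral_nonneg fun x => by positivity
  set m := ∫ x : EuclideanSpace ℝ (Fin N), |g ‖x‖| ^ p
  set E := ∫ x : EuclideanSpace ℝ (Fin N), |deriv g ‖x‖| ^ p
  set Q := |g c| ^ p
  have h1 : L * (m + p * η * Q * C2) ≤ E + η ^ p * Q * C1 :=
    (mul_le_mul_of_nonneg_right hcon (by positivity)).trans hcomp
  have h2 : ε * m ≤ Q * (L * p * η * C2 / 2) := by
    calc ε * m ≤ ε * (Q * W) := mul_le_mul_of_nonneg_left hm hεpos.le
      _ = Q * (ε * W) := by ring
      _ = _ := by rw [hεW]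
  have h3 := mul_lt_mul_of_pos_left hη hMp
  nlinarith

end final

theorem stmt8 (N : ℕ) (hN : 2 ≤ N) (p : ℝ) (hp : 1 < p)
    (R₀ R R₁ : ℝ) (hR₀ : 0 < R₀) (h0R : R₀ < R) (hRR : R < R₁) :
    ∃ Ω₁ Ω₂ : Set (EuclideanSpace ℝ (Fin N)),
      IsOpen Ω₁ ∧ IsOpen Ω₂ ∧ Ω₁.Nonempty ∧ Ω₂.Nonempty ∧ Disjoint Ω₁ Ω₂ ∧
      Ω₁ ⊆ ball (0 : EuclideanSpace ℝ (Fin N)) R₁ \ closure (ball 0 R₀) ∧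
      Ω₂ ⊆ ball (0 : EuclideanSpace ℝ (Fin N)) R₁ \ closure (ball 0 R₀) ∧
      lam1 p Ω₁ < lam1 p (ball (0 : EuclideanSpace ℝ (Fin N)) R \ closure (ball 0 R₀)) ∧
      lam1 p Ω₂ < lam1 p (ball (0 : EuclideanSpace ℝ (Fin N)) R₁ \ closure (ball 0 R)) := by
  have : NeZero N := ⟨by omega⟩
  have hR : 0 < R := hR₀.trans h0R
  set e : EuclideanSpace ℝ (Fin N) := EuclideanSpace.single 0 1 with he
  have he1 : ‖e‖ = 1 := by simp [he]
  have : Nontrivial (EuclideanSpace ℝ (Fin N)) :=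
    ⟨⟨e, 0, fun h => by rw [h, norm_zero] at he1; norm_num at he1⟩⟩
  obtain ⟨t, ht0, ht1, ht2, ht3⟩ : ∃ t : ℝ, 0 < t ∧ t ≤ R₀ ∧ t ≤ R - R₀ ∧ t ≤ R₁ - R :=
    ⟨min R₀ (min (R - R₀) (R₁ - R)), by
      refine lt_min hR₀ (lt_min ?_ ?_) <;> linarith, min_le_left _ _,
      (min_le_right _ _).trans (min_le_left _ _), (min_le_right _ _).trans (min_le_right _ _)⟩
  have hte : ‖t • e‖ = t := by rw [norm_smul, he1, mul_one, Real.norm_eq_abs, abs_of_pos ht0]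
  refine ⟨ball (t • e) R \ closure (ball 0 R₀), ball 0 R₁ \ closure (ball (t • e) R),
    isOpen_ball.sdiff isClosed_closure, isOpen_ball.sdiff isClosed_closure, ⟨R • e, ?_, ?_⟩,
    ⟨(-R) • e, ?_, ?_⟩, ?_, ?_, ?_, ?_, ?_⟩
  · rw [mem_ball, dist_eq_norm, ← sub_smul, norm_smul, he1, mul_one, Real.norm_eq_abs,
      abs_of_pos (by linarith)]
    linarith
  · rw [closure_ball _ hR₀.ne', mem_closedBall_zero_iff, norm_smul, he1, mul_one,
      Real.norm_eq_abs, abs_of_pos hR]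
    linarith
  · rw [mem_ball_zero_iff, norm_smul, he1, mul_one, Real.norm_eq_abs, abs_neg, abs_of_pos hR]
    exact hRR
  · rw [closure_ball _ hR.ne', mem_closedBall, dist_eq_norm, ← sub_smul, norm_smul, he1, mul_one,
      Real.norm_eq_abs, abs_of_neg (by linarith)]
    linarith
  · rw [Set.disjoint_left]
    intro x hx hx2
    exact hx2.2 (subset_closure hx.1)
  · intro x hx
    refine ⟨?_, hx.2⟩
    have h := hx.1
    rw [mem_ball, dist_eq_norm] at h
    rw [mem_ball_zero_iff]
    have := norm_add_le (x - t • e) (t • e)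
    rw [sub_add_cancel] at this
    linarith
  · intro x hx
    refine ⟨hx.1, ?_⟩
    have h := hx.2
    rw [closure_ball _ hR.ne', mem_closedBall, dist_eq_norm, not_le] at h
    rw [closure_ball _ hR₀.ne', mem_closedBall_zero_iff, not_le]
    have := norm_sub_le x (t • e)
    linarith
  · exact strict_lt hp hR₀ h0R 0 (t • e) (by rw [sub_zero, hte]) ht0 ht1
  · exact strict_lt hp hR hRR (t • e) 0 (by rw [zero_sub, norm_neg, hte]) ht0 (by linarith)
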